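/- (Degenerate coercivity when the initial measure is concentrated on a straight line.) Let 0 < s < 1 and let the collision kernel b satisfy b(cos θ)·θ^{2+2s} → K as θ → 0+ for some K > 0. Let α ∈ (2s, 2], let F₀ be a Borel probability measure on ℝ³ which is concentrated on some straight line L = {v₀ + τ w : τ ∈ ℝ} (i.e. F₀(L) = 1) but is not a single Dirac mass, let ψ₀ ∈ 𝒦^α be its characteristic function, and let ψ be a solution of the Fourier-transformed (Bobylev) homogeneous Boltzmann Cauchy problem with initial datum ψ₀. Then there exist R > 0, T > 0 and c > 0 such that for every t ∈ [0,T] and every measurable h : ℝ³ → ℂ with ∫ (1+|ξ|²)^s |h(ξ)|² dξ < ∞: ∫_{ℝ³} ( ∫_{S²} b(ξ·σ/|ξ|)(1 − |ψ(t,ξ⁻)|) dσ ) |h(ξ)|² dξ ≥ c · t · ∫_{{|ξ| ≥ R}} |ξ|^{2s} |h(ξ)|² dξ, where ξ⁻ = (ξ − |ξ|σ)/2. -/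

import Mathlib

noncomputable section

open MeasureTheory Real Filter Metric Set
open scoped RealInnerProductSpace Topology

/-- ℝ³ as a Euclidean space. -/
abbrev E3 : Type := EuclideanSpace ℝ (Fin 3)

/-- The surface measure on the unit sphere S² ⊂ ℝ³. -/
def sphμ : Measure (sphere (0 : E3) 1) := (volume : Measure E3).toSphere

/-- The characteristic function (Fourier transform) of a Borel measure on ℝ³,
`ψ(ξ) = ∫ e^{-i v·ξ} dΨ(v)`. -/
def charFn (Ψ : Measure E3) (ξ : E3) : ℂ :=
  ∫ v, Complex.exp (-(Complex.I * (⟪v, ξ⟫ : ℂ))) ∂Ψ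

/-- `ψ` is a characteristic function of some Borel probability measure on ℝ³. -/
def IsCharFn (ψ : E3 → ℂ) : Prop :=
  ∃ Ψ : Measure E3, IsProbabilityMeasure Ψ ∧ ψ = charFn Ψ

/-- Finiteness of `‖φ - 1‖_α`, i.e. the quantitative part of membership in `𝒦^α`. -/
def KBdd (α : ℝ) (φ : E3 → ℂ) : Prop :=
  ∃ C : ℝ, ∀ ξ : E3, ξ ≠ 0 → ‖φ ξ - 1‖ ≤ C * ‖ξ‖ ^ α

/-- Membership in the space `𝒦^α`. -/
def memK (α : ℝ) (φ : E3 → ℂ) : Prop := IsCharFn φ ∧ KBdd α φ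

/-- The distance `‖φ - φ'‖_α = sup_{ξ ≠ 0} |φ(ξ) - φ'(ξ)|/|ξ|^α` on `𝒦^α`. -/
def Kdist (α : ℝ) (φ φ' : E3 → ℂ) : ℝ :=
  ⨆ ξ : {ξ : E3 // ξ ≠ 0}, ‖φ ξ.1 - φ' ξ.1‖ / ‖(ξ.1 : E3)‖ ^ α

/-- `ξ⁺ = ξ/2 + (|ξ|/2)σ`. -/
def xiPlus (ξ : E3) (σ : sphere (0 : E3) 1) : E3 := (1/2 : ℝ) • ξ + (‖ξ‖ / 2) • (σ : E3)

/-- `ξ⁻ = ξ/2 - (|ξ|/2)σ`. -/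
def xiMinus (ξ : E3) (σ : sphere (0 : E3) 1) : E3 := (1/2 : ℝ) • ξ - (‖ξ‖ / 2) • (σ : E3)

/-- The Bobylev collision integrand at time `t`, frequency `ξ`, direction `σ`. -/
def bobylevIntegrand (b : ℝ → ℝ) (ψ : ℝ → E3 → ℂ) (t : ℝ) (ξ : E3)
    (σ : sphere (0 : E3) 1) : ℂ :=
  (b (⟪ξ, (σ : E3)⟫ / ‖ξ‖) : ℂ) *
    (ψ t (xiPlus ξ σ) * ψ t (xiMinus ξ σ) - ψ t ξ)

/-- `ψ : [0,∞) × ℝ³ → ℂ` is a solution of the Fourier-transformed (Bobylev)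
homogeneous Boltzmann Cauchy problem with collision kernel `b` and initial datum `ψ₀`. -/
structure IsBobylevSolution (b : ℝ → ℝ) (ψ : ℝ → E3 → ℂ) (ψ₀ : E3 → ℂ) : Prop where
  cont : ContinuousOn (fun p : ℝ × E3 => ψ p.1 p.2) (Set.Ici 0 ×ˢ Set.univ)
  init : ψ 0 = ψ₀
  isCharFn : ∀ t ≥ 0, IsCharFn (ψ t)
  integrable : ∀ t ≥ 0, ∀ ξ : E3, Integrable (bobylevIntegrand b ψ t ξ) sphμ
  eq : ∀ t ≥ 0, ∀ ξ : E3, HasDerivWithinAt (fun τ => ψ τ ξ)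
      (∫ σ, bobylevIntegrand b ψ t ξ σ ∂sphμ) (Set.Ici 0) t

/-- Continuity of `t ↦ ψ(t,·)` from `[0,∞)` into the metric space `(𝒦^α, ‖·‖_α)`. -/
def KContinuous (α : ℝ) (ψ : ℝ → E3 → ℂ) : Prop :=
  ∀ t₀ ∈ Set.Ici (0:ℝ), Tendsto (fun t => Kdist α (ψ t) (ψ t₀)) (𝓝[Set.Ici (0:ℝ)] t₀) (𝓝 0)

/-- The angular singularity assumption `b(cos θ) θ^{2+2s} → K` as `θ → 0+`. -/
def KernelSingular (b : ℝ → ℝ) (s K : ℝ) : Prop :=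
  Tendsto (fun θ : ℝ => b (Real.cos θ) * θ ^ (2 + 2*s)) (𝓝[>] 0) (𝓝 K)



/-- `N φ ξ = 1 - |φ(ξ)|²`. -/
def NN (φ : E3 → ℂ) (ξ : E3) : ℝ := 1 - ‖φ ξ‖ ^ 2

lemma charFn_integrable (Ψ : Measure E3) [IsProbabilityMeasure Ψ] (ξ : E3) :
    Integrable (fun v => Complex.exp (-(Complex.I * (⟪v, ξ⟫ : ℂ)))) Ψ := by
  refine Integrable.of_bound (C := 1) ?_ ?_
  · exact Continuous.aestronglyMeasurable (by fun_prop)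
  · refine Eventually.of_forall fun v => ?_
    rw [Complex.norm_exp]
    simp

lemma one_sub_cos_integrable (Ψ : Measure E3) [IsProbabilityMeasure Ψ] (ξ : E3) :
    Integrable (fun p : E3 × E3 => 1 - Real.cos ⟪p.1 - p.2, ξ⟫) (Ψ.prod Ψ) := by
  refine Integrable.of_bound (C := 2) ?_ ?_
  · exact Continuous.aestronglyMeasurable (by fun_prop)
  · refine Eventually.of_forall fun v => ?_
    rw [Real.norm_eq_abs, abs_le]
    constructor <;> linarith [Real.cos_le_one ⟪v.1 - v.2, ξ⟫, Real.neg_one_le_cos ⟪v.1 - v.2, ξ⟫]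

lemma NN_charFn (Ψ : Measure E3) [IsProbabilityMeasure Ψ] (ξ : E3) :
    NN (charFn Ψ) ξ = ∫ p, (1 - Real.cos ⟪p.1 - p.2, ξ⟫) ∂(Ψ.prod Ψ) := by
  have h1 : (charFn Ψ ξ) * (starRingEnd ℂ) (charFn Ψ ξ) =
      ∫ p, Complex.exp (-(Complex.I * (⟪p.1, ξ⟫ : ℂ))) *
        (starRingEnd ℂ) (Complex.exp (-(Complex.I * (⟪p.2, ξ⟫ : ℂ)))) ∂(Ψ.prod Ψ) := by
    rw [integral_prod_mul (fun v => Complex.exp (-(Complex.I * (⟪v, ξ⟫ : ℂ))))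
      (fun v => (starRingEnd ℂ) (Complex.exp (-(Complex.I * (⟪v, ξ⟫ : ℂ)))))]
    rw [integral_conj]
    rfl
  have hintg : Integrable (fun p : E3 × E3 => Complex.exp (-(Complex.I * (⟪p.1, ξ⟫ : ℂ))) *
        (starRingEnd ℂ) (Complex.exp (-(Complex.I * (⟪p.2, ξ⟫ : ℂ))))) (Ψ.prod Ψ) := by
    refine Integrable.of_bound (C := 1) ?_ ?_
    · exact Continuous.aestronglyMeasurable (by fun_prop)
    · refine Eventually.of_forall fun v => ?_
      rw [norm_mul, RCLike.norm_conj, Complex.norm_exp, Complex.norm_exp]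
      simp
  have h2 : ‖charFn Ψ ξ‖ ^ 2 = ∫ p, Real.cos ⟪p.1 - p.2, ξ⟫ ∂(Ψ.prod Ψ) := by
    have h3 : ‖charFn Ψ ξ‖ ^ 2 = ((charFn Ψ ξ) * (starRingEnd ℂ) (charFn Ψ ξ)).re := by
      rw [Complex.mul_conj, Complex.ofReal_re, Complex.normSq_eq_norm_sq]
    rw [h3, h1]
    have h4 := integral_re hintg
    simp only [RCLike.re_eq_complex_re] at h4
    rw [← h4]
    congr 1
    ext p
    rw [← Complex.exp_conj, ← Complex.exp_add]
    have : -(Complex.I * (⟪p.1, ξ⟫ : ℂ)) + (starRingEnd ℂ) (-(Complex.I * (⟪p.2, ξ⟫ : ℂ)))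
      = ((-⟪p.1 - p.2, ξ⟫ : ℝ) : ℂ) * Complex.I := by
      rw [inner_sub_left]
      simp
      ring
    rw [this, Complex.exp_ofReal_mul_I_re, Real.cos_neg]
  have hc : Integrable (fun p : E3 × E3 => Real.cos ⟪p.1 - p.2, ξ⟫) (Ψ.prod Ψ) := by
    refine Integrable.of_bound (C := 1) ?_ ?_
    · exact Continuous.aestronglyMeasurable (by fun_prop)
    · exact Eventually.of_forall fun v => by
        rw [Real.norm_eq_abs]; exact Real.abs_cos_le_one _
  rw [integral_sub (integrable_const _) hc, NN, h2]
  simp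

lemma cos_sub_ineq (x y : ℝ) :
    1 - Real.cos (x - y) ≤ 2 * (1 - Real.cos x) + 2 * (1 - Real.cos y) := by
  rw [Real.cos_sub]
  nlinarith [sq_nonneg (Real.sin x + Real.sin y), sq_nonneg (1 - Real.cos x - (1 - Real.cos y)),
    Real.sin_sq_add_cos_sq x, Real.sin_sq_add_cos_sq y,
    Real.cos_le_one x, Real.cos_le_one y, Real.neg_one_le_cos x, Real.neg_one_le_cos y,
    sq_nonneg (Real.cos x + Real.cos y - 2)]

lemma NN_sub_le {φ : E3 → ℂ} (h : IsCharFn φ) (x y : E3) :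
    NN φ (x - y) ≤ 2 * NN φ x + 2 * NN φ y := by
  obtain ⟨Ψ, hP, rfl⟩ := h
  rw [NN_charFn, NN_charFn, NN_charFn, ← integral_const_mul, ← integral_const_mul,
    ← integral_add ((one_sub_cos_integrable Ψ x).const_mul 2)
      ((one_sub_cos_integrable Ψ y).const_mul 2)]
  refine integral_mono (one_sub_cos_integrable Ψ _)
    (((one_sub_cos_integrable Ψ x).const_mul 2).add
      ((one_sub_cos_integrable Ψ y).const_mul 2)) fun p => ?_
  simp only [inner_sub_right]
  exact cos_sub_ineq _ _

lemma NN_neg {φ : E3 → ℂ} (h : IsCharFn φ) (x : E3) : NN φ (-x) = NN φ x := by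
  obtain ⟨Ψ, hP, rfl⟩ := h
  rw [NN_charFn, NN_charFn]
  simp [inner_neg_right]

lemma NN_nonneg {φ : E3 → ℂ} (h : IsCharFn φ) (x : E3) : 0 ≤ NN φ x := by
  obtain ⟨Ψ, hP, rfl⟩ := h
  rw [NN_charFn]
  exact integral_nonneg fun p => by simpa using Real.cos_le_one _

lemma NN_zero {φ : E3 → ℂ} (h : IsCharFn φ) : NN φ 0 = 0 := by
  obtain ⟨Ψ, hP, rfl⟩ := h
  rw [NN_charFn]
  simp

lemma NN_add_le {φ : E3 → ℂ} (h : IsCharFn φ) (x y : E3) :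
    NN φ (x + y) ≤ 2 * NN φ x + 2 * NN φ y := by
  have := NN_sub_le h x (-y)
  rwa [sub_neg_eq_add, NN_neg h] at this

lemma NN_half_le {φ : E3 → ℂ} (h : IsCharFn φ) (x : E3) :
    NN φ x / 2 ≤ 1 - ‖φ x‖ := by
  have h1 := NN_nonneg h x
  have h2 := norm_nonneg (φ x)
  unfold NN at *
  nlinarith [sq_nonneg (1 - ‖φ x‖)]



/-- the real one dimensional profile of a measure concentrated on a line -/
def gline (F₀ : Measure E3) (v₀ w : E3) (x : ℝ) : ℂ :=
  ∫ v, Complex.exp (-(Complex.I * ((x * ⟪v - v₀, w⟫ : ℝ) : ℂ))) ∂F₀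

lemma ae_line (F₀ : Measure E3) [IsProbabilityMeasure F₀] (v₀ w : E3) (hw : ‖w‖ = 1)
    (hline : F₀ {v : E3 | ∃ τ : ℝ, v = v₀ + τ • w} = 1) :
    ∀ᵐ v ∂F₀, v = v₀ + ⟪v - v₀, w⟫ • w := by
  have hset : {v : E3 | ∃ τ : ℝ, v = v₀ + τ • w} = {v | v = v₀ + ⟪v - v₀, w⟫ • w} := by
    ext v
    constructor
    · rintro ⟨τ, rfl⟩
      simp [inner_smul_left, hw]
    · intro h
      exact ⟨_, h⟩
  rw [hset] at hline
  have hm : MeasurableSet {v : E3 | v = v₀ + ⟪v - v₀, w⟫ • w} :=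
    (isClosed_eq (by fun_prop) (by fun_prop)).measurableSet
  exact (prob_compl_eq_zero_iff hm).2 hline

lemma charFn_line (F₀ : Measure E3) [IsProbabilityMeasure F₀] (v₀ w : E3) (hw : ‖w‖ = 1)
    (hline : F₀ {v : E3 | ∃ τ : ℝ, v = v₀ + τ • w} = 1) (ξ : E3) :
    charFn F₀ ξ = Complex.exp (-(Complex.I * (⟪v₀, ξ⟫ : ℂ))) * gline F₀ v₀ w ⟪ξ, w⟫ := by
  unfold charFn gline
  rw [← integral_const_mul]
  refine integral_congr_ae ?_
  filter_upwards [ae_line F₀ v₀ w hw hline] with v hv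
  rw [← Complex.exp_add]
  congr 1
  have : (⟪v, ξ⟫ : ℝ) = ⟪v₀, ξ⟫ + ⟪ξ, w⟫ * ⟪v - v₀, w⟫ := by
    conv_lhs => rw [hv]
    rw [inner_add_left, inner_smul_left, real_inner_comm]
    simp
    rw [real_inner_comm w ξ]
    ring
  rw [this]
  push_cast
  ring

lemma norm_charFn_line (F₀ : Measure E3) [IsProbabilityMeasure F₀] (v₀ w : E3) (hw : ‖w‖ = 1)
    (hline : F₀ {v : E3 | ∃ τ : ℝ, v = v₀ + τ • w} = 1) (ξ : E3) :
    ‖charFn F₀ ξ‖ = ‖gline F₀ v₀ w ⟪ξ, w⟫‖ := by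
  rw [charFn_line F₀ v₀ w hw hline, norm_mul, Complex.norm_exp]
  simp

lemma NN_line (F₀ : Measure E3) [IsProbabilityMeasure F₀] (v₀ w : E3) (hw : ‖w‖ = 1)
    (hline : F₀ {v : E3 | ∃ τ : ℝ, v = v₀ + τ • w} = 1) (ξ : E3) :
    NN (charFn F₀) ξ = NN (charFn F₀) (⟪ξ, w⟫ • w) := by
  unfold NN
  rw [norm_charFn_line F₀ v₀ w hw hline, norm_charFn_line F₀ v₀ w hw hline (⟪ξ, w⟫ • w)]
  simp [inner_smul_left, hw]

lemma gline_zero (F₀ : Measure E3) [IsProbabilityMeasure F₀] (v₀ w : E3) :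
    gline F₀ v₀ w 0 = 1 := by
  simp [gline]

lemma gline_neg (F₀ : Measure E3) [IsProbabilityMeasure F₀] (v₀ w : E3) (x : ℝ) :
    gline F₀ v₀ w (-x) = (starRingEnd ℂ) (gline F₀ v₀ w x) := by
  unfold gline
  rw [← integral_conj]
  congr 1
  ext v
  rw [← Complex.exp_conj]
  simp

lemma phase_line (F₀ : Measure E3) [IsProbabilityMeasure F₀] (v₀ w : E3) (hw : ‖w‖ = 1)
    (hline : F₀ {v : E3 | ∃ τ : ℝ, v = v₀ + τ • w} = 1) (η : E3) (hη : ⟪η, w⟫ = (0:ℝ))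
    (a c : E3) (hac : a + c = η) :
    (starRingEnd ℂ) (charFn F₀ η) * (charFn F₀ a * charFn F₀ c - charFn F₀ η)
      = ((-(NN (charFn F₀) c) : ℝ) : ℂ) := by
  have ha : (⟪a, w⟫ : ℝ) = - ⟪c, w⟫ := by
    rw [← hac, inner_add_left] at hη; linarith
  unfold NN
  rw [norm_charFn_line F₀ v₀ w hw hline c, charFn_line F₀ v₀ w hw hline η,
    charFn_line F₀ v₀ w hw hline a, charFn_line F₀ v₀ w hw hline c, hη, gline_zero, ha,
    gline_neg, ← hac]
  have h1 : (starRingEnd ℂ) (gline F₀ v₀ w ⟪c, w⟫) * gline F₀ v₀ w ⟪c, w⟫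
      = ((‖gline F₀ v₀ w ⟪c, w⟫‖ ^ 2 : ℝ) : ℂ) := by
    rw [mul_comm, Complex.mul_conj, Complex.normSq_eq_norm_sq]
  have h2 : Complex.exp (-(Complex.I * (⟪v₀, a + c⟫ : ℂ))) =
      Complex.exp (-(Complex.I * (⟪v₀, a⟫ : ℂ))) * Complex.exp (-(Complex.I * (⟪v₀, c⟫ : ℂ))) := by
    rw [← Complex.exp_add, inner_add_right]
    congr 1
    push_cast
    ring
  have h3 : (starRingEnd ℂ) (Complex.exp (-(Complex.I * (⟪v₀, a + c⟫ : ℂ)))) *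
      Complex.exp (-(Complex.I * (⟪v₀, a + c⟫ : ℂ))) = 1 := by
    rw [← Complex.exp_conj, ← Complex.exp_add]
    simp
  rw [mul_one]
  set X := Complex.exp (-(Complex.I * (⟪v₀, a + c⟫ : ℂ)))
  calc _ = (starRingEnd ℂ) X * (X * ((starRingEnd ℂ) (gline F₀ v₀ w ⟪c, w⟫)
        * gline F₀ v₀ w ⟪c, w⟫) - X) := by rw [h2]; ring
    _ = ((starRingEnd ℂ) X * X) * (((starRingEnd ℂ) (gline F₀ v₀ w ⟪c, w⟫)
        * gline F₀ v₀ w ⟪c, w⟫) - 1) := by ring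
    _ = _ := by rw [h3, h1]; push_cast; ring

lemma NN_pos_near_zero (F₀ : Measure E3) [IsProbabilityMeasure F₀] (v₀ w : E3) (hw : ‖w‖ = 1)
    (hline : F₀ {v : E3 | ∃ τ : ℝ, v = v₀ + τ • w} = 1)
    (hnotdirac : ∀ u : E3, F₀ {u} ≠ 1) :
    ∃ δ > (0:ℝ), ∀ x : ℝ, 0 < x → x ≤ δ → 0 < NN (charFn F₀) (x • w) := by
  by_contra hcon
  push Not at hcon
  have hk : ∀ k : ℕ, ∃ x : ℝ, 0 < x ∧ x ≤ 1 / ((k : ℝ) + 1) ∧ NN (charFn F₀) (x • w) ≤ 0 :=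
    fun k => hcon _ (by positivity)
  choose x hx0 hx1 hx2 using hk
  have hae : ∀ k, ∀ᵐ p ∂(F₀.prod F₀), Real.cos ⟪p.1 - p.2, x k • w⟫ = 1 := by
    intro k
    have h1 : ∫ p, (1 - Real.cos ⟪p.1 - p.2, x k • w⟫) ∂(F₀.prod F₀) = 0 := by
      rw [← NN_charFn]
      exact le_antisymm (hx2 k) (NN_nonneg ⟨F₀, inferInstance, rfl⟩ _)
    rw [integral_eq_zero_iff_of_nonneg (fun p => by simpa using Real.cos_le_one _)
      (one_sub_cos_integrable F₀ _)] at h1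
    filter_upwards [h1] with p hp
    simp only [Pi.zero_apply] at hp
    linarith
  have hae2 : ∀ᵐ p ∂(F₀.prod F₀), ⟪p.1 - p.2, w⟫ = (0:ℝ) := by
    filter_upwards [ae_all_iff.2 hae] with p hp
    by_contra hne
    have hxt : Tendsto x atTop (𝓝 0) :=
      squeeze_zero (fun k => (hx0 k).le) hx1 tendsto_one_div_add_atTop_nhds_zero_nat
    have hxt2 : Tendsto (fun k => |⟪p.1 - p.2, x k • w⟫|) atTop (𝓝 0) := by
      have : Tendsto (fun k => |x k * ⟪p.1 - p.2, w⟫|) atTop (𝓝 |0 * ⟪p.1 - p.2, w⟫|) :=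
        (hxt.mul_const _).abs
      simpa [inner_smul_right] using this
    have hev := hxt2.eventually (gt_mem_nhds (show (0:ℝ) < 2 * π by positivity))
    obtain ⟨k, hk⟩ := hev.exists
    have h3 := (Real.cos_eq_one_iff_of_lt_of_lt (by linarith [(abs_lt.1 hk).1])
      (abs_lt.1 hk).2).1 (hp k)
    rw [inner_smul_right] at h3
    rcases mul_eq_zero.1 h3 with h | h
    · exact (hx0 k).ne' h
    · exact hne h
  have hae3 := Measure.ae_ae_of_ae_prod hae2
  obtain ⟨u, hu1, hu2⟩ := (hae3.and (ae_line F₀ v₀ w hw hline)).exists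
  refine hnotdirac u ?_
  rw [← prob_compl_eq_zero_iff (measurableSet_singleton u)]
  have : ∀ᵐ v ∂F₀, v = u := by
    filter_upwards [hu1, ae_line F₀ v₀ w hw hline] with v hv1 hv2
    rw [hu2, hv2]
    have : (⟪v - v₀, w⟫ : ℝ) = ⟪u - v₀, w⟫ := by
      simp only [inner_sub_left] at *
      linarith
    rw [this]
  exact this



/-- a linear isometry acting on the unit sphere -/
def sphMap (L : E3 ≃ₗᵢ[ℝ] E3) (σ : sphere (0 : E3) 1) : sphere (0 : E3) 1 :=
  ⟨L σ, by
    have := σ.2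
    simp only [mem_sphere_iff_norm, sub_zero] at *
    rw [L.norm_map, this]⟩

lemma sphMap_continuous (L : E3 ≃ₗᵢ[ℝ] E3) : Continuous (sphMap L) := by
  unfold sphMap
  exact Continuous.subtype_mk (L.continuous.comp continuous_subtype_val) _

open scoped Pointwise in
lemma sphMap_measurePreserving (L : E3 ≃ₗᵢ[ℝ] E3) : MeasurePreserving (sphMap L) sphμ sphμ := by
  refine ⟨(sphMap_continuous L).measurable, ?_⟩
  ext s hs
  rw [Measure.map_apply (sphMap_continuous L).measurable hs]
  unfold sphμ
  rw [Measure.toSphere_apply' _ hs,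
    Measure.toSphere_apply' _ ((sphMap_continuous L).measurable hs)]
  congr 1
  have h1 : (Ioo (0:ℝ) 1 • ((↑) '' (sphMap L ⁻¹' s)) : Set E3) =
      L ⁻¹' (Ioo (0:ℝ) 1 • ((↑) '' s)) := by
    ext x
    simp only [Set.mem_smul, Set.mem_image, Set.mem_preimage]
    constructor
    · rintro ⟨r, hr, y, ⟨σ, hσ, rfl⟩, rfl⟩
      exact ⟨r, hr, L σ, ⟨_, hσ, rfl⟩, by simp⟩
    · rintro ⟨r, hr, y, ⟨σ, hσ, rfl⟩, hx⟩
      refine ⟨r, hr, L.symm σ, ⟨sphMap L.symm σ, ?_, rfl⟩, ?_⟩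
      · have : sphMap L (sphMap L.symm σ) = σ := by
          apply Subtype.ext
          simp [sphMap]
        rwa [this]
      · rw [← map_smul, hx]; simp
  rw [h1]
  exact L.measurePreserving.measure_preimage_emb
    L.toHomeomorph.measurableEmbedding _

/-- the set of directions near `e` with prescribed `u` component -/
def capSet (e u : E3) (lam : ℝ) : Set (sphere (0 : E3) 1) :=
  {σ | lam ≤ ⟪u, (σ : E3)⟫ ∧ ⟪u, (σ : E3)⟫ ≤ 4 * lam ∧ 0 < Real.arccos ⟪e, (σ : E3)⟫ ∧
    Real.arccos ⟪e, (σ : E3)⟫ ≤ 8 * lam}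

lemma capSet_measurable (e u : E3) (lam : ℝ) : MeasurableSet (capSet e u lam) := by
  have c1 : Continuous fun σ : sphere (0 : E3) 1 => (⟪u, (σ : E3)⟫ : ℝ) := by fun_prop
  have c2 : Continuous fun σ : sphere (0 : E3) 1 => Real.arccos ⟪e, (σ : E3)⟫ :=
    Real.continuous_arccos.comp (by fun_prop)
  exact (measurableSet_le measurable_const c1.measurable).inter
    ((measurableSet_le c1.measurable measurable_const).inter
    ((measurableSet_lt measurable_const c2.measurable).inter
    (measurableSet_le c2.measurable measurable_const)))

open scoped Pointwise in
lemma capSet_measure (e u : E3) (he : ‖e‖ = 1) (hu : ‖u‖ = 1) (heu : ⟪e, u⟫ = (0:ℝ))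
    (lam : ℝ) (h0 : 0 < lam) (h1 : lam ≤ 1 / 10) :
    ENNReal.ofReal (lam ^ 2 / 4) ≤ sphμ (capSet e u lam) := by
  obtain ⟨B, hB⟩ : ∃ B : OrthonormalBasis (Fin 3) ℝ E3, B 0 = e ∧ B 1 = u := by
    have hv : Orthonormal ℝ (Set.domRestrict ({0, 1} : Set (Fin 3)) ![e, u, 0]) := by
      constructor
      · rintro ⟨i, hi⟩
        rcases hi with rfl | rfl
        · exact he
        · exact hu
      · rintro ⟨i, hi⟩ ⟨j, hj⟩ hij
        rcases hi with rfl | rfl <;> rcases hj with rfl | rfl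
        · exact absurd rfl hij
        · exact heu
        · exact (real_inner_comm e u).trans heu
        · exact absurd rfl hij
    obtain ⟨B, hB⟩ := hv.exists_orthonormalBasis_extension_of_card_eq (by simp)
    exact ⟨B, by simpa using hB 0 (by simp), by simpa using hB 1 (by simp)⟩
  obtain ⟨hB0, hB1⟩ := hB
  let lo : Fin 3 → ℝ := ![1/2, lam, 0]
  let hi : Fin 3 → ℝ := ![3/4, 2 * lam, lam]
  have hmp := (EuclideanSpace.volume_preserving_symm_measurableEquiv_toLp (Fin 3)).comp
    B.measurePreserving_repr
  have hvol : volume ((fun x : E3 => (fun i => B.repr x i)) ⁻¹' (Set.Icc lo hi)) =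
      ENNReal.ofReal (lam ^ 2 / 4) := by
    have h2 := hmp.measure_preimage (s := Set.Icc lo hi) measurableSet_Icc.nullMeasurableSet
    rw [Real.volume_Icc_pi, ] at h2
    refine Eq.trans h2 ?_
    rw [← ENNReal.ofReal_prod_of_nonneg]
    · congr 1
      simp [lo, hi, Fin.prod_univ_three]
      ring
    · intro i _
      fin_cases i <;> simp [lo, hi] <;> linarith
  rw [← hvol]
  unfold sphμ
  rw [Measure.toSphere_apply' _ (capSet_measurable e u lam)]
  refine le_trans (measure_mono ?_) (le_mul_of_one_le_left' (by simp))
  intro x hx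
  simp only [Set.mem_preimage, Set.mem_Icc, Pi.le_def, Fin.forall_fin_succ, lo, hi] at hx
  obtain ⟨⟨a0, a1, a2, -⟩, ⟨b0, b1, b2, -⟩⟩ := hx
  simp at a0 a1 a2 b0 b1 b2
  have hx0 : B.repr x 0 = ⟪e, x⟫ := by rw [B.repr_apply_apply, hB0]
  have hx1 : B.repr x 1 = ⟪u, x⟫ := by rw [B.repr_apply_apply, hB1]
  have hn : ‖x‖ ^ 2 = (B.repr x 0) ^ 2 + (B.repr x 1) ^ 2 + (B.repr x 2) ^ 2 := by
    rw [← B.repr.norm_map x, EuclideanSpace.norm_sq_eq, Fin.sum_univ_three]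
    simp
  rw [hx0, hx1] at hn
  rw [hx0] at a0 b0
  rw [hx1] at a1 b1
  set X := (⟪e, x⟫ : ℝ)
  set Y := (⟪u, x⟫ : ℝ)
  set Z := B.repr x 2
  have hn0 := norm_nonneg x
  have hlt : ‖x‖ < 1 := by nlinarith
  have hge : 1 / 2 ≤ ‖x‖ := by nlinarith
  have hpos : 0 < ‖x‖ := by linarith
  refine Set.mem_smul.2 ⟨‖x‖, ⟨hpos, hlt⟩, ‖x‖⁻¹ • x, ⟨⟨‖x‖⁻¹ • x, ?_⟩, ?_, rfl⟩, ?_⟩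
  · simp [norm_smul, hpos.ne']
  · have e1 : (⟪u, ‖x‖⁻¹ • x⟫ : ℝ) = Y / ‖x‖ := by rw [inner_smul_right]; ring
    have e2 : (⟪e, ‖x‖⁻¹ • x⟫ : ℝ) = X / ‖x‖ := by rw [inner_smul_right]; ring
    show lam ≤ ⟪u, ‖x‖⁻¹ • x⟫ ∧ ⟪u, ‖x‖⁻¹ • x⟫ ≤ 4 * lam ∧ 0 < Real.arccos ⟪e, ‖x‖⁻¹ • x⟫ ∧
      Real.arccos ⟪e, ‖x‖⁻¹ • x⟫ ≤ 8 * lam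
    rw [e1, e2]
    have hXlt : X < ‖x‖ := by nlinarith
    refine ⟨?_, ?_, ?_, ?_⟩
    · rw [le_div_iff₀ hpos]; nlinarith
    · rw [div_le_iff₀ hpos]; nlinarith
    · rw [Real.arccos_pos, div_lt_one hpos]; exact hXlt
    · have hθ0 := Real.arccos_nonneg (X / ‖x‖)
      have hθ1 : Real.arccos (X / ‖x‖) ≤ π / 2 := by
        rw [Real.arccos_le_pi_div_two]; positivity
      have hs := Real.mul_le_sin hθ0 hθ1
      have hsin : Real.sin (Real.arccos (X / ‖x‖)) ≤ 5 * lam := by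
        rw [Real.sin_arccos]
        refine Real.sqrt_le_iff.2 ⟨by linarith, ?_⟩
        have : 1 - (X / ‖x‖) ^ 2 = (Y ^ 2 + Z ^ 2) / ‖x‖ ^ 2 := by
          field_simp
          rw [hn]; ring
        rw [this, div_le_iff₀ (by positivity)]
        have q1 : Y ^ 2 ≤ (2 * lam) ^ 2 := pow_le_pow_left₀ (by linarith) b1 2
        have q2 : Z ^ 2 ≤ lam ^ 2 := pow_le_pow_left₀ a2 b2 2
        have q3 : (1 / 2) ^ 2 ≤ ‖x‖ ^ 2 := pow_le_pow_left₀ (by norm_num) hge 2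
        nlinarith [mul_le_mul_of_nonneg_left q3 (sq_nonneg (5 * lam)), sq_nonneg lam]
      have hpi : π ≤ 3.2 := by linarith [Real.pi_lt_d2]
      have h5 : 2 / π * Real.arccos (X / ‖x‖) ≤ 5 * lam := hs.trans hsin
      have h6 : Real.arccos (X / ‖x‖) ≤ 5 * lam * π / 2 := by
        rw [div_mul_eq_mul_div, div_le_iff₀ Real.pi_pos] at h5
        linarith
      nlinarith
  · simp [smul_smul, hpos.ne']

lemma kernel_lower (b : ℝ → ℝ) (s K : ℝ) (hK : 0 < K) (hs0 : 0 < s)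
    (hb_sing : KernelSingular b s K) :
    ∃ lam0 > (0:ℝ), lam0 ≤ 1 / 10 ∧ ∀ lam, 0 < lam → lam ≤ lam0 → ∀ e u : E3, ‖e‖ = 1 →
      ∀ σ ∈ capSet e u lam, K / 2 * (8 * lam) ^ (-(2 + 2 * s)) ≤ b ⟪e, (σ : E3)⟫ := by
  have h1 := hb_sing.eventually (lt_mem_nhds (show K / 2 < K by linarith))
  rw [eventually_nhdsWithin_iff, Metric.eventually_nhds_iff] at h1
  obtain ⟨ε, hε, h⟩ := h1
  refine ⟨min (1/10) (ε / 16), by positivity, min_le_left _ _, ?_⟩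
  intro lam hl0 hl e u he σ hσ
  obtain ⟨-, -, ha, hb⟩ := hσ
  have hl2 : lam ≤ ε / 16 := hl.trans (min_le_right _ _)
  set θ := Real.arccos ⟪e, (σ : E3)⟫ with hθ
  have hσ1 : ‖(σ : E3)‖ = 1 := by simp
  have hab := abs_real_inner_le_norm e (σ : E3)
  rw [he, hσ1, mul_one, abs_le] at hab
  have hcos : Real.cos θ = ⟪e, (σ : E3)⟫ := Real.cos_arccos hab.1 hab.2
  have h2 := h (y := θ) (by rw [Real.dist_eq, sub_zero, abs_of_pos ha]; linarith) ha
  rw [hcos] at h2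
  have h3 : (8 * lam) ^ (-(2 + 2 * s)) ≤ θ ^ (-(2 + 2 * s)) :=
    Real.rpow_le_rpow_of_nonpos ha hb (by linarith)
  calc K / 2 * (8 * lam) ^ (-(2 + 2 * s)) ≤ K / 2 * θ ^ (-(2 + 2 * s)) := by gcongr
    _ ≤ (b ⟪e, (σ : E3)⟫ * θ ^ (2 + 2 * s)) * θ ^ (-(2 + 2 * s)) := by
        gcongr
    _ = b ⟪e, (σ : E3)⟫ := by
        rw [mul_assoc, ← Real.rpow_add ha]; simp



/-- the standing assumptions -/
structure LineCtx (b : ℝ → ℝ) (F₀ : Measure E3) (v₀ w : E3) (ψ : ℝ → E3 → ℂ) : Prop where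
  bmeas : Measurable b
  bnn : ∀ x, 0 ≤ b x
  blow : ∃ lam0 > (0:ℝ), lam0 ≤ 1 / 10 ∧ ∀ lam, 0 < lam → lam ≤ lam0 → ∀ e u : E3, ‖e‖ = 1 →
      ∀ σ ∈ capSet e u lam, 0 < b ⟪e, (σ : E3)⟫
  prob : IsProbabilityMeasure F₀
  hw : ‖w‖ = 1
  line : F₀ {v : E3 | ∃ τ : ℝ, v = v₀ + τ • w} = 1
  notdirac : ∀ u : E3, F₀ {u} ≠ 1
  sol : IsBobylevSolution b ψ (charFn F₀)

/-- the time derivative at `0` of `1 - |ψ|²` on the orthogonal of the line -/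
def nZero (b : ℝ → ℝ) (F₀ : Measure E3) (η : E3) : ℝ :=
  2 * ∫ σ, b (⟪η, (σ : E3)⟫ / ‖η‖) * NN (charFn F₀) (xiMinus η σ) ∂sphμ

lemma NN_cont {b : ℝ → ℝ} {ψ₀ : E3 → ℂ} {ψ : ℝ → E3 → ℂ} (h : IsBobylevSolution b ψ ψ₀)
    {t : ℝ} (ht : 0 ≤ t) : Continuous (NN (ψ t)) := by
  have h1 : Continuous (ψ t) := by
    have := h.cont.comp_continuous (f := fun ξ : E3 => (t, ξ)) (by fun_prop)
      (fun ξ => ⟨ht, mem_univ _⟩)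
    exact this
  unfold NN
  fun_prop

lemma xiMinus_cont (ξ : E3) : Continuous (xiMinus ξ) := by
  unfold xiMinus; fun_prop

section Helpers

variable {b : ℝ → ℝ} {F₀ : Measure E3} {v₀ w : E3} {ψ : ℝ → E3 → ℂ}

lemma LineCtx.char (H : LineCtx b F₀ v₀ w ψ) : IsCharFn (charFn F₀) := ⟨F₀, H.prob, rfl⟩

lemma LineCtx.cont0 (H : LineCtx b F₀ v₀ w ψ) : Continuous (NN (charFn F₀)) := by
  have := NN_cont H.sol le_rfl
  rwa [H.sol.init] at this

lemma LineCtx.N0perp (H : LineCtx b F₀ v₀ w ψ) {η : E3} (hη : ⟪η, w⟫ = (0:ℝ)) :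
    NN (charFn F₀) η = 0 := by
  have := H.prob
  rw [NN_line F₀ v₀ w H.hw H.line, hη, zero_smul, NN_zero H.char]

lemma LineCtx.integrand (H : LineCtx b F₀ v₀ w ψ) {η : E3} (hη : ⟪η, w⟫ = (0:ℝ))
    (σ : sphere (0 : E3) 1) :
    (starRingEnd ℂ) (ψ 0 η) * bobylevIntegrand b ψ 0 η σ =
      ((-(b (⟪η, (σ : E3)⟫ / ‖η‖) * NN (charFn F₀) (xiMinus η σ)) : ℝ) : ℂ) := by
  have := H.prob
  unfold bobylevIntegrand
  rw [H.sol.init]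
  have h1 := phase_line F₀ v₀ w H.hw H.line η hη (xiPlus η σ) (xiMinus η σ) (by
    unfold xiPlus xiMinus
    module)
  rw [mul_left_comm, h1]
  push_cast
  ring

lemma LineCtx.integrable (H : LineCtx b F₀ v₀ w ψ) {η : E3} (hη : ⟪η, w⟫ = (0:ℝ)) :
    Integrable (fun σ : sphere (0 : E3) 1 =>
      b (⟪η, (σ : E3)⟫ / ‖η‖) * NN (charFn F₀) (xiMinus η σ)) sphμ := by
  have h1 := ((H.sol.integrable 0 le_rfl η).const_mul ((starRingEnd ℂ) (ψ 0 η))).re.neg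
  refine h1.congr (Eventually.of_forall fun σ => ?_)
  simp only [Pi.neg_apply]
  rw [H.integrand hη]
  simp

lemma LineCtx.tendsto (H : LineCtx b F₀ v₀ w ψ) {η : E3} (hη : ⟪η, w⟫ = (0:ℝ)) :
    Tendsto (fun t => NN (ψ t) η / t) (𝓝[>] 0) (𝓝 (nZero b F₀ η)) := by
  have h1 := (H.sol.eq 0 le_rfl η).norm_sq.const_sub 1
  have h2 := h1.mono (Set.Ioi_subset_Ici_self)
  rw [hasDerivWithinAt_iff_tendsto_slope' (by simp)] at h2
  have h3 : -(2 * (inner ℝ (ψ 0 η) (∫ σ, bobylevIntegrand b ψ 0 η σ ∂sphμ)))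
      = nZero b F₀ η := by
    unfold nZero
    rw [Complex.inner, mul_comm _ ((starRingEnd ℂ) _)]
    rw [← integral_const_mul]
    simp_rw [H.integrand hη]
    rw [integral_complex_ofReal, integral_neg]
    simp
  rw [h3] at h2
  refine h2.congr' ?_
  filter_upwards [self_mem_nhdsWithin] with t ht
  have h0 : NN (ψ 0) η = 0 := by rw [H.sol.init]; exact H.N0perp hη
  unfold NN at *
  rw [slope_def_field, h0]
  simp

lemma LineCtx.nZero_pos (H : LineCtx b F₀ v₀ w ψ) {η : E3} (hη : ⟪η, w⟫ = (0:ℝ))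
    (hne : η ≠ 0) : 0 < nZero b F₀ η := by
  have := H.prob
  unfold nZero
  have hpos : 0 < ‖η‖ := norm_pos_iff.2 hne
  obtain ⟨lam0, hl0, hl1, hb⟩ := H.blow
  obtain ⟨δ, hδ, hN⟩ := NN_pos_near_zero F₀ v₀ w H.hw H.line H.notdirac
  refine mul_pos two_pos ?_
  rw [integral_pos_iff_support_of_nonneg
    (fun σ => mul_nonneg (H.bnn _) (NN_nonneg H.char _)) (H.integrable hη)]
  set lam := min lam0 (δ / (2 * ‖η‖)) with hlam
  have hlam0 : 0 < lam := lt_min hl0 (by positivity)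
  set e := ‖η‖⁻¹ • η with he
  have he1 : ‖e‖ = 1 := by simp [he, norm_smul, hpos.ne']
  have hew : ⟪e, w⟫ = (0:ℝ) := by rw [he, inner_smul_left, hη, mul_zero]
  have hm := capSet_measure e w he1 H.hw hew lam hlam0 ((min_le_left _ _).trans hl1)
  refine lt_of_lt_of_le (lt_of_lt_of_le (by simp [hlam0]) hm) (measure_mono ?_)
  intro σ hσ
  rw [Function.mem_support]
  refine (mul_pos ?_ ?_).ne'
  · have h1 := hb lam hlam0 (min_le_left _ _) e w he1 σ hσ
    rw [he, inner_smul_left] at h1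
    simpa [div_eq_inv_mul] using h1
  · rw [NN_line F₀ v₀ w H.hw H.line]
    have h2 : (⟪xiMinus η σ, w⟫ : ℝ) = -(‖η‖ / 2 * ⟪w, (σ : E3)⟫) := by
      unfold xiMinus
      rw [inner_sub_left, inner_smul_left, inner_smul_left, hη, real_inner_comm w]
      simp
    rw [h2, neg_smul, NN_neg H.char]
    obtain ⟨h3, h4, -, -⟩ := hσ
    have h5 : lam ≤ δ / (2 * ‖η‖) := min_le_right _ _
    apply hN
    · have : 0 < (⟪w, (σ : E3)⟫ : ℝ) := by linarith
      positivity
    · calc ‖η‖ / 2 * ⟪w, (σ : E3)⟫ ≤ ‖η‖ / 2 * (4 * (δ / (2 * ‖η‖))) := by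
            gcongr; linarith
        _ = δ := by field_simp; norm_num

lemma baire_line {ψ₀ : E3 → ℂ} (h : IsBobylevSolution b ψ ψ₀) (e : E3) (c : ℕ → ℝ) (δ : ℝ)
    (hδ : 0 < δ)
    (hyp : ∀ r ∈ Ioo (0:ℝ) δ, ∃ k : ℕ, ∀ t, 0 < t → t ≤ 1 / ((k:ℝ) + 1) →
      NN (ψ t) (r • e) ≤ c k * t) :
    ∃ k : ℕ, ∃ ρ > (0:ℝ), ∀ r, |r| ≤ ρ → ∀ t, 0 < t → t ≤ 1 / ((k:ℝ) + 1) →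
      NN (ψ t) (r • e) ≤ 4 * c k * t := by
  let A : ℕ → Set ℝ := fun k => {r | ∀ t, 0 < t → t ≤ 1 / ((k:ℝ) + 1) →
      NN (ψ t) (r • e) ≤ c k * t}
  have hA : ∀ k, IsClosed (A k) := by
    intro k
    simp only [A, Set.ofPred_forall]
    refine isClosed_iInter fun t => isClosed_iInter fun ht => isClosed_iInter fun _ => ?_
    exact isClosed_le ((NN_cont h ht.le).comp (by fun_prop)) continuous_const
  have hd := dense_iUnion_interior_of_closed (f := fun k => A k ∪ (Ioo 0 δ)ᶜ)
    (fun k => (hA k).union isOpen_Ioo.isClosed_compl) (by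
      refine Set.eq_univ_of_forall fun r => ?_
      by_cases hr : r ∈ Ioo (0:ℝ) δ
      · obtain ⟨k, hk⟩ := hyp r hr
        exact mem_iUnion.2 ⟨k, Or.inl hk⟩
      · exact mem_iUnion.2 ⟨0, Or.inr hr⟩)
  obtain ⟨x, hx1, hx2⟩ := hd.inter_open_nonempty (Ioo 0 δ) isOpen_Ioo ⟨δ / 2, by constructor <;> linarith⟩
  obtain ⟨k, hk⟩ := mem_iUnion.1 hx2
  obtain ⟨ρ, hρ, hball⟩ := Metric.isOpen_iff.1 (isOpen_Ioo.inter isOpen_interior) x ⟨hx1, hk⟩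
  have hin : ∀ y ∈ ball x ρ, y ∈ A k := by
    intro y hy
    have h1 := hball hy
    rcases interior_subset h1.2 with h2 | h2
    · exact h2
    · exact absurd h1.1 h2
  refine ⟨k, ρ / 2, by positivity, fun r hr t ht ht2 => ?_⟩
  have h1 := hin (x + r) (by rw [mem_ball, Real.dist_eq, add_sub_cancel_left]; linarith) t ht ht2
  have h2 := hin x (mem_ball_self hρ) t ht ht2
  have h3 := NN_sub_le (h.isCharFn t ht.le) ((x + r) • e) (x • e)
  rw [← sub_smul, add_sub_cancel_left] at h3
  linarith



/-- the lower integral version of `nZero` along a ray -/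
def Lray (b : ℝ → ℝ) (F₀ : Measure E3) (w e : E3) (r : ℝ) : ENNReal :=
  ∫⁻ σ : sphere (0 : E3) 1, ENNReal.ofReal (b ⟪e, (σ : E3)⟫) *
    ENNReal.ofReal (NN (charFn F₀) ((r / 2 * ⟪w, (σ : E3)⟫) • w)) ∂sphμ

lemma LineCtx.ofReal_nZero (H : LineCtx b F₀ v₀ w ψ) {e : E3} (he : ‖e‖ = 1)
    (hew : ⟪e, w⟫ = (0:ℝ)) {r : ℝ} (hr : 0 < r) :
    ENNReal.ofReal (nZero b F₀ (r • e)) = 2 * Lray b F₀ w e r := by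
  have := H.prob
  have hη : ⟪r • e, w⟫ = (0:ℝ) := by rw [inner_smul_left, hew, mul_zero]
  unfold nZero Lray
  rw [ENNReal.ofReal_mul two_pos.le, ofReal_integral_eq_lintegral_ofReal (H.integrable hη)
    (Eventually.of_forall fun σ => mul_nonneg (H.bnn _) (NN_nonneg H.char _))]
  congr 1
  · simp
  refine lintegral_congr fun σ => ?_
  rw [ENNReal.ofReal_mul (H.bnn _), NN_line F₀ v₀ w H.hw H.line]
  have h2 : (⟪xiMinus (r • e) σ, w⟫ : ℝ) = -(r / 2 * ⟪w, (σ : E3)⟫) := by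
    unfold xiMinus
    rw [inner_sub_left, inner_smul_left (r • e), inner_smul_left (σ : E3), hη, real_inner_comm w,
      norm_smul, he]
    simp [abs_of_pos hr]
  have h3 : (⟪r • e, (σ : E3)⟫ : ℝ) / ‖r • e‖ = ⟪e, (σ : E3)⟫ := by
    rw [norm_smul, he, inner_smul_left, Real.norm_eq_abs, abs_of_pos hr]
    simp
    field_simp
  rw [h2, neg_smul, NN_neg H.char, h3]

lemma LineCtx.domin (H : LineCtx b F₀ v₀ w ψ) {ε : ℝ} (h0 : 0 ≤ ε) (h1 : ε ≤ 1) (y : ℝ) :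
    ENNReal.ofReal (NN (charFn F₀) ((ε * y) • w)) ≤
      4 * ∫⁻ τ in Ioc (0:ℝ) 2, ENNReal.ofReal (NN (charFn F₀) ((τ * y) • w)) := by
  set f : ℝ → ENNReal := fun τ => ENNReal.ofReal (NN (charFn F₀) ((τ * y) • w)) with hf
  have hfm : Measurable f := by
    have := H.cont0
    exact ENNReal.measurable_ofReal.comp (Continuous.measurable (by fun_prop))
  have key : ∀ τ, f ε ≤ 2 * f τ + 2 * f (τ + ε) := by
    intro τ
    have h2 := NN_sub_le H.char (((τ + ε) * y) • w) ((τ * y) • w)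
    rw [← sub_smul, ← sub_mul, add_sub_cancel_left] at h2
    have e2 : ∀ x : ℝ, 2 * ENNReal.ofReal x = ENNReal.ofReal (2 * x) := fun x => by
      rw [ENNReal.ofReal_mul two_pos.le]; simp
    simp only [hf, e2]
    rw [← ENNReal.ofReal_add (mul_nonneg two_pos.le (NN_nonneg H.char _))
        (mul_nonneg two_pos.le (NN_nonneg H.char _))]
    exact ENNReal.ofReal_le_ofReal (by linarith)
  have hA : ∫⁻ τ in Ioc (0:ℝ) 1, f τ ≤ ∫⁻ τ in Ioc (0:ℝ) 2, f τ :=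
    lintegral_mono_set (Ioc_subset_Ioc_right (by norm_num))
  have hB : ∫⁻ τ in Ioc (0:ℝ) 1, f (τ + ε) ≤ ∫⁻ τ in Ioc (0:ℝ) 2, f τ := by
    rw [← lintegral_indicator measurableSet_Ioc, ← lintegral_indicator measurableSet_Ioc]
    rw [← lintegral_add_right_eq_self (μ := volume) ((Ioc (0:ℝ) 2).indicator f) ε]
    refine lintegral_mono fun τ => ?_
    by_cases hτ : τ ∈ Ioc (0:ℝ) 1
    · have : τ + ε ∈ Ioc (0:ℝ) 2 := ⟨by linarith [hτ.1], by linarith [hτ.2]⟩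
      simp [hτ, this]
    · rw [indicator_of_notMem hτ]; exact zero_le
  calc f ε = ∫⁻ τ in Ioc (0:ℝ) 1, f ε := by simp
    _ ≤ ∫⁻ τ in Ioc (0:ℝ) 1, (2 * f τ + 2 * f (τ + ε)) := lintegral_mono fun τ => key τ
    _ = 2 * (∫⁻ τ in Ioc (0:ℝ) 1, f τ) + 2 * ∫⁻ τ in Ioc (0:ℝ) 1, f (τ + ε) := by
        rw [lintegral_add_left (hfm.const_mul 2), lintegral_const_mul _ hfm,
          lintegral_const_mul' _ _ (by norm_num)]
    _ ≤ 2 * (∫⁻ τ in Ioc (0:ℝ) 2, f τ) + 2 * ∫⁻ τ in Ioc (0:ℝ) 2, f τ := by gcongr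
    _ = _ := by rw [← add_mul]; norm_num

lemma LineCtx.ray_bound (H : LineCtx b F₀ v₀ w ψ) {e : E3} (hew : ⟪e, w⟫ = (0:ℝ)) :
    ∃ C : ℝ, ∃ ρ > (0:ℝ), ∀ r, |r| ≤ ρ → nZero b F₀ (r • e) ≤ C := by
  have hη : ∀ r : ℝ, ⟪r • e, w⟫ = (0:ℝ) := fun r => by rw [inner_smul_left, hew, mul_zero]
  obtain ⟨k, ρ, hρ, h⟩ := baire_line H.sol e (fun k => (k:ℝ)) 1 one_pos (by
    intro r _
    have h1 := (H.tendsto (hη r)).eventually (gt_mem_nhds (lt_add_one _))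
    rw [eventually_nhdsWithin_iff, Metric.eventually_nhds_iff] at h1
    obtain ⟨T, hT, h1⟩ := h1
    obtain ⟨k1, hk1⟩ := exists_nat_one_div_lt hT
    obtain ⟨k2, hk2⟩ := exists_nat_ge (nZero b F₀ (r • e) + 1)
    refine ⟨max k1 k2, fun t ht ht2 => ?_⟩
    have h3 : t < T := by
      refine lt_of_le_of_lt (ht2.trans ?_) hk1
      apply one_div_le_one_div_of_le (by positivity)
      have : (k1 : ℝ) ≤ ((max k1 k2 : ℕ) : ℝ) := by exact_mod_cast le_max_left _ _
      linarith
    have h4 := h1 (y := t) (by rw [Real.dist_eq, sub_zero, abs_of_pos ht]; exact h3) ht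
    rw [div_lt_iff₀ ht] at h4
    have h5 : (k2 : ℝ) ≤ ((max k1 k2 : ℕ) : ℝ) := by exact_mod_cast le_max_right _ _
    refine h4.le.trans ?_
    gcongr
    linarith)
  refine ⟨4 * k, ρ, hρ, fun r hr => ?_⟩
  refine le_of_tendsto (H.tendsto (hη r)) ?_
  have : Ioc (0:ℝ) (1 / ((k:ℝ) + 1)) ∈ 𝓝[>] (0:ℝ) := Ioc_mem_nhdsGT (by positivity)
  filter_upwards [this] with t ht
  rw [div_le_iff₀ ht.1]
  exact h r hr t ht.1 ht.2

lemma LineCtx.ray_small (H : LineCtx b F₀ v₀ w ψ) {e : E3} (he : ‖e‖ = 1)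
    (hew : ⟪e, w⟫ = (0:ℝ)) {ε : ℝ} (hε : 0 < ε) :
    ∃ δ > (0:ℝ), ∀ r ∈ Ioo (0:ℝ) δ, nZero b F₀ (r • e) < ε := by
  obtain ⟨C, ρ, hρ, hC⟩ := H.ray_bound hew
  have hc0 := H.cont0
  have hbm : Measurable fun σ : sphere (0 : E3) 1 => ENNReal.ofReal (b ⟪e, (σ : E3)⟫) :=
    ENNReal.measurable_ofReal.comp (H.bmeas.comp (Continuous.measurable (by fun_prop)))
  have hLb : ∀ r, 0 < r → r ≤ ρ → Lray b F₀ w e r ≤ ENNReal.ofReal C := by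
    intro r h0 h1
    have h2 := ENNReal.ofReal_le_ofReal (hC r (by rwa [abs_of_pos h0]))
    rw [H.ofReal_nZero he hew h0] at h2
    refine le_trans ?_ h2
    rw [two_mul]
    exact le_self_add
  let bd : sphere (0 : E3) 1 → ENNReal := fun σ => 4 * ∫⁻ τ in Ioc (0:ℝ) 2,
      ENNReal.ofReal (b ⟪e, (σ : E3)⟫) *
      ENNReal.ofReal (NN (charFn F₀) ((τ * (ρ / 4 * ⟪w, (σ : E3)⟫)) • w))
  have hjm : Measurable (fun p : sphere (0 : E3) 1 × ℝ => ENNReal.ofReal (b ⟪e, (p.1 : E3)⟫) *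
      ENNReal.ofReal (NN (charFn F₀) ((p.2 * (ρ / 4 * ⟪w, (p.1 : E3)⟫)) • w))) := by
    refine (hbm.comp measurable_fst).mul (ENNReal.measurable_ofReal.comp ?_)
    exact Continuous.measurable (by fun_prop)
  have hfin : IsFiniteMeasure sphμ := by unfold sphμ; infer_instance
  have hbd : ∫⁻ σ, bd σ ∂sphμ ≠ ⊤ := by
    have hle : ∫⁻ σ, bd σ ∂sphμ ≤ 4 * ∫⁻ τ in Ioc (0:ℝ) 2, ENNReal.ofReal C := by
      simp only [bd]
      rw [lintegral_const_mul' _ _ (by norm_num)]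
      gcongr
      rw [lintegral_lintegral_swap hjm.aemeasurable]
      refine setLIntegral_mono' measurableSet_Ioc fun τ hτ => ?_
      have h1 := hLb (τ * ρ / 2) (by have := hτ.1; positivity) (by nlinarith [hτ.2])
      refine le_trans (le_of_eq ?_) h1
      unfold Lray
      refine lintegral_congr fun σ => ?_
      congr 4
      ring
    refine ne_top_of_le_ne_top ?_ hle
    simp [ENNReal.mul_eq_top]
  have hT : Tendsto (fun r => Lray b F₀ w e r) (𝓝[>] 0) (𝓝 (∫⁻ σ : sphere (0 : E3) 1, 0 ∂sphμ)) := by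
    refine tendsto_lintegral_filter_of_dominated_convergence bd ?_ ?_ hbd ?_
    · refine Eventually.of_forall fun r => hbm.mul (ENNReal.measurable_ofReal.comp ?_)
      exact Continuous.measurable (by fun_prop)
    · have : Ioc (0:ℝ) (ρ / 2) ∈ 𝓝[>] (0:ℝ) := Ioc_mem_nhdsGT (by positivity)
      filter_upwards [this] with r hr
      refine Eventually.of_forall fun σ => ?_
      have h1 := H.domin (ε := 2 * r / ρ) (by have := hr.1; positivity)
        (by rw [div_le_one hρ]; linarith [hr.2]) (ρ / 4 * ⟪w, (σ : E3)⟫)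
      have h2 : 2 * r / ρ * (ρ / 4 * ⟪w, (σ : E3)⟫) = r / 2 * ⟪w, (σ : E3)⟫ := by
        field_simp; ring
      rw [h2] at h1
      simp only [bd]
      rw [lintegral_const_mul' _ _ ENNReal.ofReal_ne_top, mul_left_comm]
      gcongr
    · refine Eventually.of_forall fun σ => ?_
      have hcont : Continuous fun r : ℝ =>
          NN (charFn F₀) ((r / 2 * ⟪w, (σ : E3)⟫) • w) := by fun_prop
      have h1 : Tendsto (fun r : ℝ => ENNReal.ofReal (b ⟪e, (σ : E3)⟫ *
          NN (charFn F₀) ((r / 2 * ⟪w, (σ : E3)⟫) • w))) (𝓝[>] 0) (𝓝 0) := by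
        have h2 := (hcont.const_mul (b ⟪e, (σ : E3)⟫)).tendsto 0
        have h3 := ENNReal.tendsto_ofReal (h2.mono_left (nhdsWithin_le_nhds (s := Ioi 0)))
        simpa [NN_zero H.char] using h3
      refine h1.congr fun r => ?_
      rw [ENNReal.ofReal_mul (H.bnn _)]
  rw [lintegral_zero] at hT
  have hev := hT.eventually (gt_mem_nhds (show (0:ENNReal) < ENNReal.ofReal (ε / 2) by simp [hε]))
  rw [eventually_nhdsWithin_iff, Metric.eventually_nhds_iff] at hev
  obtain ⟨δ, hδ, hev⟩ := hev
  refine ⟨δ, hδ, fun r hr => ?_⟩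
  have h1 := hev (y := r) (by rw [Real.dist_eq, sub_zero, abs_of_pos hr.1]; exact hr.2) hr.1
  by_contra hcon
  push Not at hcon
  have h2 := ENNReal.ofReal_le_ofReal hcon
  rw [H.ofReal_nZero he hew hr.1] at h2
  have h3 : 2 * Lray b F₀ w e r < 2 * ENNReal.ofReal (ε / 2) :=
    ENNReal.mul_lt_mul_right (by norm_num) (by norm_num) h1
  have h4 : 2 * ENNReal.ofReal (ε / 2) = ENNReal.ofReal ε := by
    rw [show (2 : ENNReal) = ENNReal.ofReal 2 by simp, ← ENNReal.ofReal_mul two_pos.le]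
    congr 1; ring
  rw [h4] at h3
  exact absurd h2 (not_le.2 h3)

lemma LineCtx.ray_unif (H : LineCtx b F₀ v₀ w ψ) {e : E3} (he : ‖e‖ = 1)
    (hew : ⟪e, w⟫ = (0:ℝ)) {ε : ℝ} (hε : 0 < ε) :
    ∃ T > (0:ℝ), ∃ ρ > (0:ℝ), ∀ r, |r| ≤ ρ → ∀ t, 0 < t → t ≤ T →
      NN (ψ t) (r • e) ≤ ε * t := by
  have hη : ∀ r : ℝ, ⟪r • e, w⟫ = (0:ℝ) := fun r => by rw [inner_smul_left, hew, mul_zero]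
  obtain ⟨δ, hδ, hsm⟩ := H.ray_small he hew (ε := ε / 4) (by positivity)
  obtain ⟨k, ρ, hρ, h⟩ := baire_line H.sol e (fun _ => ε / 4) δ hδ (by
    intro r hr
    have h1 := (H.tendsto (hη r)).eventually (gt_mem_nhds (hsm r hr))
    rw [eventually_nhdsWithin_iff, Metric.eventually_nhds_iff] at h1
    obtain ⟨T, hT, h1⟩ := h1
    obtain ⟨k1, hk1⟩ := exists_nat_one_div_lt hT
    refine ⟨k1, fun t ht ht2 => ?_⟩
    have h4 := h1 (y := t)
      (by rw [Real.dist_eq, sub_zero, abs_of_pos ht]; exact ht2.trans_lt hk1) ht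
    rw [div_lt_iff₀ ht] at h4
    exact h4.le)
  refine ⟨1 / ((k:ℝ) + 1), by positivity, ρ, hρ, fun r hr t ht ht2 => ?_⟩
  have := h r hr t ht ht2
  linarith



lemma LineCtx.perp_unif (H : LineCtx b F₀ v₀ w ψ) {ε : ℝ} (hε : 0 < ε) :
    ∃ T > (0:ℝ), ∃ ρ > (0:ℝ), ∀ ζ : E3, ⟪ζ, w⟫ = (0:ℝ) → ‖ζ‖ ≤ ρ → ∀ t, 0 < t → t ≤ T →
      NN (ψ t) ζ ≤ ε * t := by
  obtain ⟨B, hB⟩ : ∃ B : OrthonormalBasis (Fin 3) ℝ E3, B 0 = w := by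
    have hv : Orthonormal ℝ (Set.domRestrict ({0} : Set (Fin 3)) ![w, 0, 0]) := by
      constructor
      · rintro ⟨i, hi⟩
        rcases hi with rfl
        exact H.hw
      · rintro ⟨i, hi⟩ ⟨j, hj⟩ hij
        rcases hi with rfl
        rcases hj with rfl
        exact absurd rfl hij
    obtain ⟨B, hB⟩ := hv.exists_orthonormalBasis_extension_of_card_eq (by simp)
    exact ⟨B, by simpa using hB 0 (by simp)⟩
  have hperp : ∀ i, i ≠ 0 → (⟪B i, w⟫ : ℝ) = 0 := by
    intro i hi
    rw [← hB]
    exact B.orthonormal.2 hi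
  obtain ⟨T1, hT1, ρ1, hρ1, h1⟩ := H.ray_unif (B.norm_eq_one 1) (hperp 1 (by decide))
    (ε := ε / 4) (by positivity)
  obtain ⟨T2, hT2, ρ2, hρ2, h2⟩ := H.ray_unif (B.norm_eq_one 2) (hperp 2 (by decide))
    (ε := ε / 4) (by positivity)
  refine ⟨min T1 T2, lt_min hT1 hT2, min ρ1 ρ2, lt_min hρ1 hρ2, ?_⟩
  intro ζ hζ hn t ht0 ht
  have hdec : ζ = (⟪B 1, ζ⟫ : ℝ) • B 1 + (⟪B 2, ζ⟫ : ℝ) • B 2 := by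
    have h3 := B.sum_repr' ζ
    rw [Fin.sum_univ_three, hB, real_inner_comm, hζ, zero_smul, zero_add] at h3
    exact h3.symm
  have hc : ∀ i, |(⟪B i, ζ⟫ : ℝ)| ≤ ‖ζ‖ := by
    intro i
    have := abs_real_inner_le_norm (B i) ζ
    rwa [B.norm_eq_one, one_mul] at this
  have k1 := h1 _ ((hc 1).trans (hn.trans (min_le_left _ _))) t ht0 (ht.trans (min_le_left _ _))
  have k2 := h2 _ ((hc 2).trans (hn.trans (min_le_right _ _))) t ht0 (ht.trans (min_le_right _ _))
  have k3 := NN_add_le (H.sol.isCharFn t ht0.le) ((⟪B 1, ζ⟫ : ℝ) • B 1) ((⟪B 2, ζ⟫ : ℝ) • B 2)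
  rw [← hdec] at k3
  linarith

lemma LineCtx.annulus (H : LineCtx b F₀ v₀ w ψ) :
    ∃ c > (0:ℝ), ∃ T > (0:ℝ), ∀ η : E3, ⟪η, w⟫ = (0:ℝ) → 1 ≤ ‖η‖ → ‖η‖ ≤ 4 →
      ∀ t, 0 < t → t ≤ T → c * t ≤ NN (ψ t) η := by
  let A : Set E3 := {η | ⟪η, w⟫ = (0:ℝ) ∧ 1 ≤ ‖η‖} ∩ closedBall 0 4
  have hAc : IsCompact A := by
    refine (isCompact_closedBall _ _).inter_left ?_
    exact (isClosed_eq (by fun_prop) continuous_const).inter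
      (isClosed_le continuous_const continuous_norm)
  have key : ∃ c > (0:ℝ), ∃ T > (0:ℝ), ∀ η ∈ A, ∀ t, 0 < t → t ≤ T → c * t ≤ NN (ψ t) η := by
    refine hAc.induction_on (p := fun S => ∃ c > (0:ℝ), ∃ T > (0:ℝ), ∀ η ∈ S, ∀ t, 0 < t →
      t ≤ T → c * t ≤ NN (ψ t) η) ⟨1, one_pos, 1, one_pos, by simp⟩ ?_ ?_ ?_
    · rintro S S' hSS ⟨c, hc, T, hT, h⟩
      exact ⟨c, hc, T, hT, fun η hη => h η (hSS hη)⟩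
    · rintro S S' ⟨c, hc, T, hT, h⟩ ⟨c', hc', T', hT', h'⟩
      refine ⟨min c c', lt_min hc hc', min T T', lt_min hT hT', ?_⟩
      rintro η (hη | hη) t ht0 ht
      · refine le_trans ?_ (h η hη t ht0 (ht.trans (min_le_left _ _)))
        gcongr
        exact min_le_left _ _
      · refine le_trans ?_ (h' η hη t ht0 (ht.trans (min_le_right _ _)))
        gcongr
        exact min_le_right _ _
    · rintro η ⟨⟨hη, hη1⟩, -⟩
      have hne : η ≠ 0 := by
        rintro rfl
        simp at hη1
        linarith
      have hpos := H.nZero_pos hη hne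
      set n := nZero b F₀ η
      have h1 := (H.tendsto hη).eventually (lt_mem_nhds (show n / 2 < n by linarith))
      rw [eventually_nhdsWithin_iff, Metric.eventually_nhds_iff] at h1
      obtain ⟨T1, hT1, h1⟩ := h1
      obtain ⟨T2, hT2, ρ, hρ, h2⟩ := H.perp_unif (ε := n / 8) (by positivity)
      refine ⟨A ∩ ball η ρ, inter_mem self_mem_nhdsWithin
        (mem_nhdsWithin_of_mem_nhds (ball_mem_nhds _ hρ)), n / 8, by positivity,
        min (T1 / 2) T2, by positivity, ?_⟩
      rintro η' ⟨⟨⟨hη', -⟩, -⟩, hb⟩ t ht0 ht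
      have k1 := h1 (y := t) (by
        rw [Real.dist_eq, sub_zero, abs_of_pos ht0]
        have := ht.trans (min_le_left _ _)
        linarith) ht0
      rw [lt_div_iff₀ ht0] at k1
      have k2 := h2 (η' - η) (by rw [inner_sub_left, hη, hη', sub_zero])
        (by rw [← dist_eq_norm]; exact (mem_ball.1 hb).le) t ht0 (ht.trans (min_le_right _ _))
      have k3 := NN_sub_le (H.sol.isCharFn t ht0.le) η' (η' - η)
      rw [sub_sub_cancel] at k3
      linarith
  obtain ⟨c, hc, T, hT, h⟩ := key
  exact ⟨c, hc, T, hT, fun η h1 h2 h3 => h η ⟨⟨h1, h2⟩, by simpa using h3⟩⟩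

lemma exists_perp (e w : E3) : ∃ u : E3, ‖u‖ = 1 ∧ ⟪e, u⟫ = (0:ℝ) ∧ ⟪u, w⟫ = (0:ℝ) := by
  let L : E3 →ₗ[ℝ] ℝ × ℝ := (innerₛₗ ℝ e).prod (innerₛₗ ℝ w)
  have h1 : LinearMap.ker L ≠ ⊥ := LinearMap.ker_ne_bot_of_finrank_lt (by simp)
  obtain ⟨x, hx, hx0⟩ := Submodule.exists_mem_ne_zero_of_ne_bot h1
  have hx2 : (⟪e, x⟫ : ℝ) = 0 ∧ (⟪w, x⟫ : ℝ) = 0 := by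
    have : L x = 0 := hx
    simpa [L] using this
  refine ⟨‖x‖⁻¹ • x, by simp [norm_smul, hx0], ?_, ?_⟩
  · rw [inner_smul_right, hx2.1, mul_zero]
  · rw [inner_smul_left, real_inner_comm, hx2.2, mul_zero]

lemma pair_lower {ψ₀ : E3 → ℂ} (hbm : Measurable b) (hbn : ∀ x, 0 ≤ b x)
    (h : IsBobylevSolution b ψ ψ₀) {t : ℝ} (ht : 0 ≤ t) (ξ u : E3)
    (hu : ‖u‖ = 1) (heu : ⟪ξ, u⟫ = (0:ℝ)) :
    ∫⁻ σ : sphere (0 : E3) 1, ENNReal.ofReal (b (⟪ξ, (σ : E3)⟫ / ‖ξ‖) *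
        (NN (ψ t) ((‖ξ‖ * ⟪u, (σ : E3)⟫) • u) / 4)) ∂sphμ ≤
      2 * ∫⁻ σ : sphere (0 : E3) 1, ENNReal.ofReal
        (b (⟪ξ, (σ : E3)⟫ / ‖ξ‖) * (1 - ‖ψ t (xiMinus ξ σ)‖)) ∂sphμ := by
  let L : E3 ≃ₗᵢ[ℝ] E3 := (ℝ ∙ u)ᗮ.reflection
  have hL : ∀ x : E3, L x = x - (2 * ⟪u, x⟫) • u := by
    intro x
    simp only [L]
    rw [Submodule.reflection_orthogonal_apply, Submodule.reflection_singleton_apply, hu]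
    simp
    module
  set f : sphere (0 : E3) 1 → ENNReal := fun σ => ENNReal.ofReal
        (b (⟪ξ, (σ : E3)⟫ / ‖ξ‖) * (1 - ‖ψ t (xiMinus ξ σ)‖)) with hf
  have hψc : Continuous (ψ t) := by
    have := h.cont.comp_continuous (f := fun ξ : E3 => (t, ξ)) (by fun_prop)
      (fun ξ => ⟨ht, mem_univ _⟩)
    exact this
  have hfm : Measurable f := by
    refine ENNReal.measurable_ofReal.comp (Measurable.mul ?_ ?_)
    · exact hbm.comp (Continuous.measurable (by fun_prop))
    · have := xiMinus_cont ξ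
      exact Continuous.measurable (by fun_prop)
  have hmp := sphMap_measurePreserving L
  have hchar := h.isCharFn t ht
  have e1 : ∫⁻ σ, f (sphMap L σ) ∂sphμ = ∫⁻ σ, f σ ∂sphμ := hmp.lintegral_comp hfm
  have e2 : 2 * ∫⁻ σ, f σ ∂sphμ = ∫⁻ σ, (f σ + f (sphMap L σ)) ∂sphμ := by
    rw [lintegral_add_left hfm, e1, two_mul]
  rw [e2]
  refine lintegral_mono fun σ => ?_
  have i1 : (⟪ξ, ((sphMap L σ : sphere (0 : E3) 1) : E3)⟫ : ℝ) = ⟪ξ, (σ : E3)⟫ := by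
    show (⟪ξ, L σ⟫ : ℝ) = _
    rw [hL, inner_sub_right, inner_smul_right, heu]
    simp
  have i2 : xiMinus ξ (sphMap L σ) - xiMinus ξ σ = (‖ξ‖ * ⟪u, (σ : E3)⟫) • u := by
    unfold xiMinus
    show (1/2 : ℝ) • ξ - (‖ξ‖ / 2) • L σ - _ = _
    rw [hL]
    module
  simp only [hf]
  rw [i1]
  have j1 := NN_half_le hchar (xiMinus ξ σ)
  have j2 := NN_half_le hchar (xiMinus ξ (sphMap L σ))
  have j3 := NN_sub_le hchar (xiMinus ξ (sphMap L σ)) (xiMinus ξ σ)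
  rw [i2] at j3
  have n1 := NN_nonneg hchar (xiMinus ξ σ)
  have n2 := NN_nonneg hchar (xiMinus ξ (sphMap L σ))
  rw [← ENNReal.ofReal_add (mul_nonneg (hbn _) (by linarith)) (mul_nonneg (hbn _) (by linarith)),
    ← mul_add]
  apply ENNReal.ofReal_le_ofReal
  refine mul_le_mul_of_nonneg_left ?_ (hbn _)
  linarith


end Helpers


/-- time-degenerate coercivity when the initial measure is
concentrated on a straight line but is not a single Dirac mass. -/
theorem degenerate_coercivity_on_line
    (s K : ℝ) (hs0 : 0 < s) (hs1 : s < 1) (hK : 0 < K)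
    (b : ℝ → ℝ) (hb_meas : Measurable b) (hb_nonneg : ∀ x, 0 ≤ b x)
    (hb_sing : KernelSingular b s K)
    (α : ℝ) (hα : 2 * s < α) (hα2 : α ≤ 2)
    (F₀ : Measure E3) [IsProbabilityMeasure F₀]
    (v₀ w : E3) (hw : ‖w‖ = 1)
    (hline : F₀ {v : E3 | ∃ τ : ℝ, v = v₀ + τ • w} = 1)
    (hnotdirac : ∀ u : E3, F₀ {u} ≠ 1)
    (ψ₀ : E3 → ℂ) (hψ₀ : ψ₀ = charFn F₀) (hψ₀K : KBdd α ψ₀)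
    (ψ : ℝ → E3 → ℂ) (hψ : IsBobylevSolution b ψ ψ₀) :
    ∃ R > (0:ℝ), ∃ T > (0:ℝ), ∃ c > (0:ℝ), ∀ t ∈ Set.Icc (0:ℝ) T,
      ∀ h : E3 → ℂ, Measurable h →
      (∫⁻ ξ : E3, ENNReal.ofReal ((1 + ‖ξ‖ ^ 2) ^ s * ‖h ξ‖ ^ 2)) < ⊤ →
      ENNReal.ofReal (c * t) *
          (∫⁻ ξ : E3 in {ξ : E3 | R ≤ ‖ξ‖}, ENNReal.ofReal (‖ξ‖ ^ (2*s) * ‖h ξ‖ ^ 2)) ≤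
        ∫⁻ ξ : E3,
          (∫⁻ σ, ENNReal.ofReal
              (b (⟪ξ, (σ : E3)⟫ / ‖ξ‖) * (1 - ‖ψ t (xiMinus ξ σ)‖)) ∂sphμ)
            * ENNReal.ofReal (‖h ξ‖ ^ 2) := by
  subst hψ₀
  obtain ⟨lam0, hl0, hl1, hlow⟩ := kernel_lower b s K hK hs0 hb_sing
  have H : LineCtx b F₀ v₀ w ψ :=
    { bmeas := hb_meas
      bnn := hb_nonneg
      blow := ⟨lam0, hl0, hl1, fun lam h0 h1 e u he σ hσ =>
        lt_of_lt_of_le (by positivity) (hlow lam h0 h1 e u he σ hσ)⟩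
      prob := inferInstance
      hw := hw
      line := hline
      notdirac := hnotdirac
      sol := hψ }
  obtain ⟨c0, hc0, T, hT, hann⟩ := H.annulus
  set κ : ℝ := K / 2 * 8 ^ (-(2 + 2 * s)) * (c0 / 4) / 8 with hκ
  have hκ0 : 0 < κ := by positivity
  have main : ∀ t, 0 < t → t ≤ T → ∀ ξ : E3, 1 / lam0 ≤ ‖ξ‖ →
      ENNReal.ofReal (κ * t * ‖ξ‖ ^ (2 * s)) ≤
        ∫⁻ σ : sphere (0 : E3) 1, ENNReal.ofReal
          (b (⟪ξ, (σ : E3)⟫ / ‖ξ‖) * (1 - ‖ψ t (xiMinus ξ σ)‖)) ∂sphμ := by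
    intro t ht0 htT ξ hξ
    have hpos : 0 < ‖ξ‖ := lt_of_lt_of_le (by positivity) hξ
    obtain ⟨u, hu, hξu, huw⟩ := exists_perp ξ w
    have hpair := pair_lower hb_meas hb_nonneg hψ ht0.le ξ u hu hξu
    set I := ∫⁻ σ : sphere (0 : E3) 1, ENNReal.ofReal
          (b (⟪ξ, (σ : E3)⟫ / ‖ξ‖) * (1 - ‖ψ t (xiMinus ξ σ)‖)) ∂sphμ
    set lam := 1 / ‖ξ‖ with hlam
    have hlamp : 0 < lam := by positivity
    have hlaml : lam ≤ lam0 := by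
      rw [hlam, div_le_iff₀ hpos]
      rwa [div_le_iff₀ hl0, mul_comm] at hξ
    set e := ‖ξ‖⁻¹ • ξ with he
    have he1 : ‖e‖ = 1 := by simp [he, norm_smul, hpos.ne']
    have heu : ⟪e, u⟫ = (0:ℝ) := by rw [he, inner_smul_left, hξu, mul_zero]
    have hcap := capSet_measure e u he1 hu heu lam hlamp (hlaml.trans hl1)
    set M : ℝ := K / 2 * (8 * lam) ^ (-(2 + 2 * s)) * (c0 * t / 4) with hM
    have hM0 : 0 < M := by positivity
    have hlower : ENNReal.ofReal M * sphμ (capSet e u lam) ≤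
        ∫⁻ σ : sphere (0 : E3) 1, ENNReal.ofReal (b (⟪ξ, (σ : E3)⟫ / ‖ξ‖) *
          (NN (ψ t) ((‖ξ‖ * ⟪u, (σ : E3)⟫) • u) / 4)) ∂sphμ := by
      rw [← setLIntegral_const]
      refine le_trans ?_ (setLIntegral_le_lintegral (capSet e u lam) _)
      refine setLIntegral_mono' (capSet_measurable e u lam) fun σ hσ => ?_
      apply ENNReal.ofReal_le_ofReal
      have k1 := hlow lam hlamp hlaml e u he1 σ hσ
      have k2 : (⟪e, (σ : E3)⟫ : ℝ) = ⟪ξ, (σ : E3)⟫ / ‖ξ‖ := by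
        rw [he, inner_smul_left]; simp [div_eq_inv_mul]
      rw [k2] at k1
      obtain ⟨h1, h2, -, -⟩ := hσ
      have hp : 0 < ‖ξ‖ * ⟪u, (σ : E3)⟫ := mul_pos hpos (by linarith)
      have hnorm : ‖(‖ξ‖ * ⟪u, (σ : E3)⟫) • u‖ = ‖ξ‖ * ⟪u, (σ : E3)⟫ := by
        rw [norm_smul, hu, mul_one, Real.norm_eq_abs, abs_of_pos hp]
      have hx1 : ‖ξ‖ * lam = 1 := by rw [hlam]; field_simp
      have k3 := hann ((‖ξ‖ * ⟪u, (σ : E3)⟫) • u)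
        (by rw [inner_smul_left, huw, mul_zero])
        (by rw [hnorm]; nlinarith) (by rw [hnorm]; nlinarith) t ht0 htT
      rw [hM]
      exact mul_le_mul k1 (by linarith) (by positivity) (hb_nonneg _)
    have hfin : ENNReal.ofReal (2 * (κ * t * ‖ξ‖ ^ (2 * s))) ≤ 2 * I := by
      refine le_trans ?_ (hlower.trans hpair)
      refine le_trans ?_ (mul_le_mul_right hcap _)
      rw [← ENNReal.ofReal_mul hM0.le]
      apply le_of_eq
      congr 1
      rw [hM, hκ, Real.mul_rpow (by norm_num) hlamp.le]
      have : lam ^ (-(2 + 2 * s)) * lam ^ 2 = ‖ξ‖ ^ (2 * s) := by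
        rw [← Real.rpow_natCast, ← Real.rpow_add hlamp, hlam, one_div,
          Real.inv_rpow hpos.le, ← Real.rpow_neg hpos.le]
        congr 1
        push_cast
        ring
      rw [← this]
      ring
    rw [ENNReal.ofReal_mul two_pos.le, ENNReal.ofReal_ofNat] at hfin
    exact (ENNReal.mul_le_mul_iff_right (by norm_num) (by norm_num)).1 hfin
  refine ⟨1 / lam0, by positivity, T, hT, κ, hκ0, ?_⟩
  rintro t ⟨ht0, htT⟩ h - -
  rcases ht0.eq_or_lt with rfl | htp
  · simp
  have hms : MeasurableSet {ξ : E3 | 1 / lam0 ≤ ‖ξ‖} :=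
    measurableSet_le measurable_const measurable_norm
  rw [← lintegral_const_mul' _ _ ENNReal.ofReal_ne_top]
  refine le_trans ?_ (setLIntegral_le_lintegral {ξ : E3 | 1 / lam0 ≤ ‖ξ‖} _)
  refine setLIntegral_mono' hms fun ξ hξ => ?_
  rw [ENNReal.ofReal_mul (by positivity : 0 ≤ ‖ξ‖ ^ (2 * s)), ← mul_assoc,
    ← ENNReal.ofReal_mul (by positivity)]
  gcongr
  exact main t htp htT ξ hξ
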